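/- arXiv:2301.13203 — 3 statements merged into one kernel-verified Lean document; each statement's English description precedes it below -/
import Mathlib

section
/- For every μ ∈ V_n and every Hermitian derivation D ∈ Der(μ), one has tr(M_μ D) = 0. -/
/-!
Write `⟪A⟫ := ∑ i j, ⟪μ(e_i, e_j), (A.μ)(e_i, e_j)⟫`. Expanding traces in the standard orthonormal
basis and moving adjoints across the inner product gives the moment-map identity
`tr (M_μ A) = 2 ⟪A⟫` for every endomorphism `A`: the three sums in `M_μ` produce the three terms
`A μ(X,Y)`, `-μ(X, A Y)` and `-μ(A X, Y)` of `A.μ`. For a derivation, `A.μ = 0`, so the trace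
vanishes.
-/

open scoped InnerProductSpace ComplexOrder
open LinearMap

noncomputable section

abbrev E (n : ℕ) := EuclideanSpace ℂ (Fin n)

abbrev Vb (n : ℕ) := E n →ₗ[ℂ] E n →ₗ[ℂ] E n

def e (n : ℕ) (i : Fin n) : E n := EuclideanSpace.single i 1

def Lop {n : ℕ} (μ : Vb n) (X : E n) : E n →ₗ[ℂ] E n := μ X

def Rop {n : ℕ} (μ : Vb n) (X : E n) : E n →ₗ[ℂ] E n := μ.flip X

def Mmap {n : ℕ} (μ : Vb n) : E n →ₗ[ℂ] E n :=
  (2 : ℂ) • ∑ i, Lop μ (e n i) ∘ₗ adjoint (Lop μ (e n i))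
  - (2 : ℂ) • ∑ i, adjoint (Lop μ (e n i)) ∘ₗ Lop μ (e n i)
  - (2 : ℂ) • ∑ i, adjoint (Rop μ (e n i)) ∘ₗ Rop μ (e n i)

/-- `A` is a derivation of `μ`. -/
def IsDer {n : ℕ} (μ : Vb n) (A : E n →ₗ[ℂ] E n) : Prop :=
  ∀ X Y, A (μ X Y) = μ (A X) Y + μ X (A Y)

def normSq {n : ℕ} (μ : Vb n) : ℝ :=
  ∑ i, ∑ j, ∑ k, ‖(⟪e n k, μ (e n i) (e n j)⟫_ℂ : ℂ)‖ ^ 2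

/-- The trace in the orthonormal basis `e`. -/
lemma trace_eq_sum_e {n : ℕ} (T : E n →ₗ[ℂ] E n) :
    LinearMap.trace ℂ (E n) T = ∑ j, ⟪e n j, T (e n j)⟫_ℂ := by
  simpa [e] using LinearMap.trace_eq_sum_inner T (EuclideanSpace.basisFun (Fin n) ℂ)

lemma trace_self_adjoint_comp {n : ℕ} (L A : E n →ₗ[ℂ] E n) :
    LinearMap.trace ℂ (E n) ((L ∘ₗ adjoint L) ∘ₗ A) =
      ∑ j, ⟪L (e n j), A (L (e n j))⟫_ℂ := by
  rw [LinearMap.comp_assoc, LinearMap.trace_comp_comm', trace_eq_sum_e]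
  simp [LinearMap.adjoint_inner_right]

lemma trace_adjoint_self_comp {n : ℕ} (L A : E n →ₗ[ℂ] E n) :
    LinearMap.trace ℂ (E n) ((adjoint L ∘ₗ L) ∘ₗ A) =
      ∑ j, ⟪L (e n j), L (A (e n j))⟫_ℂ := by
  rw [trace_eq_sum_e]
  simp [LinearMap.adjoint_inner_right]

/-- The moment-map identity `tr (M_μ A) = 2 ∑ i j, ⟪μ(e_i, e_j), (A.μ)(e_i, e_j)⟫`. -/
lemma trace_Mmap_comp {n : ℕ} (μ : Vb n) (A : E n →ₗ[ℂ] E n) :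
    LinearMap.trace ℂ (E n) (Mmap μ ∘ₗ A) =
      2 * ∑ i, ∑ j, ⟪μ (e n i) (e n j),
        A (μ (e n i) (e n j)) - μ (A (e n i)) (e n j) - μ (e n i) (A (e n j))⟫_ℂ := by
  have hsum (f : Fin n → E n →ₗ[ℂ] E n) : (∑ i, f i) ∘ₗ A = ∑ i, f i ∘ₗ A :=
    Finset.sum_mul (R := Module.End ℂ (E n)) _ _ _
  simp only [Mmap, LinearMap.sub_comp, LinearMap.smul_comp, hsum, map_sub, map_smul,
    map_sum, trace_self_adjoint_comp, trace_adjoint_self_comp, Lop, Rop, LinearMap.flip_apply,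
    inner_sub_right, Finset.sum_sub_distrib, smul_eq_mul]
  -- The `R`-sum runs over the second argument first.
  rw [Finset.sum_comm (f := fun i j => ⟪μ (e n j) (e n i), μ (A (e n j)) (e n i)⟫_ℂ)]
  ring

/-- For every `μ ∈ V_n` and every Hermitian derivation `D ∈ Der(μ)`, `tr(M_μ D) = 0`. -/
theorem trace_Mmap_der {n : ℕ} (μ : Vb n) (D : E n →ₗ[ℂ] E n)
    (hD : adjoint D = D) (hDer : IsDer μ D) :
    LinearMap.trace ℂ (E n) (Mmap μ ∘ₗ D) = 0 := by
  rw [trace_Mmap_comp]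
  simp [hDer _ _]
end
end

section
/- For every 0 ≠ μ ∈ V_n one has tr(M_μ²) ≥ 4‖μ‖⁴/n (equivalently, F_n([μ]) := tr(M_μ²)/‖μ‖⁴ ≥ 4/n), with equality if and only if M_μ = −(2‖μ‖²/n)·I. Thus 4/n is the minimum value of the square norm of the moment map F_n on ℙV_n, attained exactly when M_μ is a scalar multiple of the identity. -/
/-! The operator `Mmap μ` is Hermitian, so `tr (M²) = ∑ ‖M eᵢ‖²` is real and nonnegative. Since
`tr (A A*) = tr (A* A)`, the first two sums in `Mmap μ` have equal traces, and the third one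
contributes `tr M = -2‖μ‖²` (`trace_Mmap`). With `c = 2‖μ‖²/n`, the Hermitian operator
`M + c • id` therefore satisfies `tr ((M + c • id)²) = tr (M²) - 4‖μ‖⁴/n`. The left side is the
squared Hilbert–Schmidt norm of `M + c • id`, hence nonnegative, and zero exactly when
`M = -c • id`. -/

open scoped InnerProductSpace ComplexOrder
open LinearMap

noncomputable section

/-- `tr (A* A)` is the squared Hilbert–Schmidt norm of `A`. -/
lemma trace_adjoint_comp_self {n : ℕ} (A : E n →ₗ[ℂ] E n) :
    LinearMap.trace ℂ (E n) (adjoint A ∘ₗ A) = ((∑ i, ‖A (e n i)‖ ^ 2 : ℝ) : ℂ) := by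
  rw [LinearMap.trace_eq_sum_inner _ (EuclideanSpace.basisFun (Fin n) ℂ)]
  push_cast
  refine Finset.sum_congr rfl fun i _ => ?_
  rw [Function.comp_apply, LinearMap.adjoint_inner_right, inner_self_eq_norm_sq_to_K]
  simp [e]

lemma adjoint_Mmap {n : ℕ} (μ : Vb n) : adjoint (Mmap μ) = Mmap μ := by
  have h2 : (starRingEnd ℂ) 2 = 2 := map_ofNat _ 2
  simp [Mmap, map_sub, map_sum, LinearMap.adjoint_comp, map_smulₛₗ, h2]

lemma normSq_eq {n : ℕ} (μ : Vb n) : normSq μ = ∑ i, ∑ j, ‖μ (e n i) (e n j)‖ ^ 2 := by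
  unfold normSq
  refine Finset.sum_congr rfl fun i _ => Finset.sum_congr rfl fun j _ => ?_
  simp only [e, EuclideanSpace.norm_sq_eq, EuclideanSpace.inner_single_left, map_one, one_mul]

lemma trace_Mmap {n : ℕ} (μ : Vb n) :
    LinearMap.trace ℂ (E n) (Mmap μ) = ((-(2 * normSq μ) : ℝ) : ℂ) := by
  have hL : ∑ i, LinearMap.trace ℂ (E n) (adjoint (Lop μ (e n i)) ∘ₗ Lop μ (e n i))
      = (normSq μ : ℂ) := by
    simp only [trace_adjoint_comp_self, normSq_eq, Lop, Complex.ofReal_sum]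
  have hR : ∑ i, LinearMap.trace ℂ (E n) (adjoint (Rop μ (e n i)) ∘ₗ Rop μ (e n i))
      = (normSq μ : ℂ) := by
    simp only [trace_adjoint_comp_self, normSq_eq, Rop, Complex.ofReal_sum, LinearMap.flip_apply]
    exact Finset.sum_comm
  have hL' : ∑ i, LinearMap.trace ℂ (E n) (Lop μ (e n i) ∘ₗ adjoint (Lop μ (e n i)))
      = (normSq μ : ℂ) := by
    rw [← hL]
    exact Finset.sum_congr rfl fun i _ => LinearMap.trace_comp_comm' _ _
  simp only [Mmap, map_sub, map_smul, map_sum, hL, hR, hL', smul_eq_mul]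
  push_cast
  ring

/-- For every `0 ≠ μ ∈ V_n`: `tr(M_μ²)` is real and `tr(M_μ²) ≥ 4‖μ‖⁴/n`, with equality
iff `M_μ = −(2‖μ‖²/n)·I`.  Thus `F_n([μ]) = tr(M_μ²)/‖μ‖⁴ ≥ 4/n`, and `4/n` is the
minimum of the square norm of the moment map, attained exactly when `M_μ` is a scalar
multiple of the identity. -/
theorem Fn_min {n : ℕ} (μ : Vb n) (hμ : μ ≠ 0) :
    (LinearMap.trace ℂ (E n) (Mmap μ ∘ₗ Mmap μ)).im = 0 ∧
    4 * (normSq μ) ^ 2 / n ≤ (LinearMap.trace ℂ (E n) (Mmap μ ∘ₗ Mmap μ)).re ∧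
    ((LinearMap.trace ℂ (E n) (Mmap μ ∘ₗ Mmap μ)).re = 4 * (normSq μ) ^ 2 / n
      ↔ Mmap μ = ((-(2 * normSq μ / n) : ℝ) : ℂ) • (LinearMap.id : E n →ₗ[ℂ] E n)) := by
  -- In dimension zero there is no nonzero `μ`.
  have hn : (n : ℝ) ≠ 0 := by
    rintro h
    obtain rfl : n = 0 := by exact_mod_cast h
    exact hμ (LinearMap.ext fun x => LinearMap.ext fun y => Subsingleton.elim _ _)
  have hM := trace_adjoint_comp_self (Mmap μ)
  rw [adjoint_Mmap] at hM
  set c : ℝ := 2 * normSq μ / n with hc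
  set D : E n →ₗ[ℂ] E n := Mmap μ + (c : ℂ) • LinearMap.id with hD
  have hDa : adjoint D = D := by
    have hid : adjoint (LinearMap.id : E n →ₗ[ℂ] E n) = LinearMap.id := LinearMap.adjoint_id
    rw [hD, map_add, adjoint_Mmap, map_smulₛₗ, hid, Complex.conj_ofReal]
  have hDt := trace_adjoint_comp_self D
  have hexp : D ∘ₗ D = Mmap μ ∘ₗ Mmap μ + (2 * c : ℂ) • Mmap μ
      + (c ^ 2 : ℂ) • LinearMap.id := by
    ext1 x
    simp only [hD, LinearMap.comp_apply, LinearMap.add_apply, LinearMap.smul_apply,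
      LinearMap.id_apply, map_add, map_smul]
    module
  have hkey : (LinearMap.trace ℂ (E n) (Mmap μ ∘ₗ Mmap μ)).re
      = 4 * (normSq μ) ^ 2 / n + ∑ i, ‖D (e n i)‖ ^ 2 := by
    rw [hDa, hexp, map_add, map_add, map_smul, map_smul, trace_Mmap, hM, LinearMap.trace_id,
      finrank_euclideanSpace_fin, smul_eq_mul, smul_eq_mul] at hDt
    rw [hM, Complex.ofReal_re]
    have hDr : (∑ i, ‖Mmap μ (e n i)‖ ^ 2) + 2 * c * (-(2 * normSq μ)) + c ^ 2 * n
        = ∑ i, ‖D (e n i)‖ ^ 2 := by exact_mod_cast hDt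
    rw [← hDr, hc]
    field_simp
    ring
  refine ⟨by rw [hM, Complex.ofReal_im], ?_, ?_⟩
  · rw [hkey]
    exact le_add_of_nonneg_right (Finset.sum_nonneg fun i _ => sq_nonneg _)
  · have hiff : Mmap μ = ((-c : ℝ) : ℂ) • (LinearMap.id : E n →ₗ[ℂ] E n) ↔ D = 0 := by
      rw [hD, Complex.ofReal_neg, neg_smul, eq_neg_iff_add_eq_zero]
    rw [hiff, hkey, add_eq_left, Finset.sum_eq_zero_iff_of_nonneg fun i _ => sq_nonneg _]
    constructor
    · intro h
      refine (EuclideanSpace.basisFun (Fin n) ℂ).toBasis.ext fun i => ?_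
      simpa [e] using h i (Finset.mem_univ i)
    · intro h i _
      simp [h]
end
end

section
/- Let 0 ≠ μ ∈ V_n be a symmetric Leibniz algebra structure on ℂ^n, and suppose M_μ = c·I + D for some c ∈ ℝ and some D ∈ Der(μ) (so [μ] is a critical point of F_n restricted to the variety of symmetric Leibniz algebras). Then the Hermitian operator D is positive semidefinite: every eigenvalue of D is nonnegative. -/
/-!
Write `⟨ν, μ⟩` for the Hermitian pairing on bilinear maps and `A.μ` for the infinitesimal action of
`End(ℂⁿ)`. The operator `M_μ` is a moment map: `tr(A M_μ) = 2⟨μ, A.μ⟩` (`trace_comp_Mmap`), and the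
adjoint of the action of `A` is the action of `A*` (`pair_act_left`). Both follow from a polarized
version of the first identity (`pair_act`).

Hence for a derivation `A` one has `tr([A,A*] M_μ) = 2‖A*.μ‖²`. Let `D X = aX` with `X ≠ 0`. Since
`μ` is symmetric Leibniz, `L_X` and `R_X` are both derivations, and each satisfies `[D,A] = aA`
because `D` is a derivation. If one of them is nonzero, then `a‖A‖² = 2‖A*.μ‖²` for `A` that
operator, so `a ≥ 0` (`nonneg_of_derivation`). If both vanish, then `⟨X, M_μ X⟩ ≥ 0`
(`inner_Mmap_nonneg`), that is `c + a ≥ 0`; and `c ≤ 0` (`const_nonpos`) because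
`0 ≤ tr(M_μ²) = c tr M_μ = -2c‖μ‖²`. So `a ≥ 0` again.
-/

open scoped InnerProductSpace ComplexOrder
open LinearMap

noncomputable section

/-- `μ` is a left Leibniz algebra structure. -/
def IsLeftLeibniz {n : ℕ} (μ : Vb n) : Prop :=
  ∀ x y z : E n, μ x (μ y z) = μ (μ x y) z + μ y (μ x z)

/-- `μ` is a symmetric Leibniz algebra structure. -/
def IsSymLeibniz {n : ℕ} (μ : Vb n) : Prop :=
  IsLeftLeibniz μ ∧ ∀ x y z : E n, μ (μ x y) z = μ (μ x z) y + μ x (μ y z)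

/-- The Hermitian pairing `⟨ν, μ⟩ = ∑ᵢⱼ ⟨ν(eᵢ,eⱼ), μ(eᵢ,eⱼ)⟩` on bilinear maps. -/
def pair {n : ℕ} (ν μ : Vb n) : ℂ :=
  ∑ i, ∑ j, ⟪ν (e n i) (e n j), μ (e n i) (e n j)⟫_ℂ

/-- The infinitesimal action `(A.μ)(X,Y) = A μ(X,Y) - μ(AX,Y) - μ(X,AY)` of `End(ℂⁿ)`. -/
def act {n : ℕ} (A : E n →ₗ[ℂ] E n) (μ : Vb n) : Vb n :=
  μ.compr₂ A - μ.comp A - μ.compl₂ A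

/-- The polarized moment map: the operator representing `A ↦ ⟨ν, A.μ⟩` through the trace form.
On the diagonal it is half of `Mmap μ`. -/
def polarMoment {n : ℕ} (ν μ : Vb n) : E n →ₗ[ℂ] E n :=
  ∑ i, Lop μ (e n i) ∘ₗ adjoint (Lop ν (e n i))
  - ∑ i, adjoint (Lop ν (e n i)) ∘ₗ Lop μ (e n i)
  - ∑ i, adjoint (Rop ν (e n i)) ∘ₗ Rop μ (e n i)

lemma Mmap_eq {n : ℕ} (μ : Vb n) : Mmap μ = (2 : ℂ) • polarMoment μ μ := by
  simp only [Mmap, polarMoment, smul_sub]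

lemma adjoint_polarMoment {n : ℕ} (ν μ : Vb n) : adjoint (polarMoment ν μ) = polarMoment μ ν := by
  simp only [polarMoment, map_sub, map_sum, adjoint_comp, adjoint_adjoint]

lemma trace_eq {n : ℕ} (A : E n →ₗ[ℂ] E n) : trace ℂ (E n) A = ∑ i, ⟪e n i, A (e n i)⟫_ℂ := by
  rw [LinearMap.trace_eq_sum_inner A (EuclideanSpace.basisFun (Fin n) ℂ)]
  simp [e]

lemma trace_adjoint {n : ℕ} (A : E n →ₗ[ℂ] E n) :
    trace ℂ (E n) (adjoint A) = starRingEnd ℂ (trace ℂ (E n) A) := by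
  simp only [trace_eq, map_sum, adjoint_inner_right, inner_conj_symm]

lemma ext_e {n : ℕ} {F : Type*} [AddCommGroup F] [Module ℂ F] {A B : E n →ₗ[ℂ] F}
    (h : ∀ i, A (e n i) = B (e n i)) : A = B := by
  refine (EuclideanSpace.basisFun (Fin n) ℂ).toBasis.ext fun i => ?_
  simpa [e] using h i

lemma inner_self_nonneg_complex {n : ℕ} (x : E n) : (0 : ℂ) ≤ ⟪x, x⟫_ℂ := by
  rw [inner_self_eq_norm_sq_to_K, ← RCLike.ofReal_pow]
  exact Complex.zero_le_real.mpr (sq_nonneg _)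

lemma inner_self_pos_complex {n : ℕ} {x : E n} (hx : x ≠ 0) : (0 : ℂ) < ⟪x, x⟫_ℂ :=
  (inner_self_nonneg_complex x).lt_of_ne' (inner_self_ne_zero.mpr hx)

/-- `nonneg_of_mul_nonneg_left` for the (non-linear) order on `ℂ`. -/
lemma nonneg_of_mul_nonneg_complex {a t : ℂ} (h : 0 ≤ a * t) (ht : 0 < t) : 0 ≤ a := by
  obtain ⟨r, hr, rfl⟩ : ∃ r : ℝ, 0 < r ∧ (r : ℂ) = t := by
    rw [Complex.pos_iff] at ht
    exact ⟨t.re, ht.1, Complex.ext (by simp) (by simp [ht.2])⟩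
  rw [Complex.nonneg_iff] at h ⊢
  simp only [Complex.re_mul_ofReal, Complex.im_mul_ofReal] at h
  exact ⟨nonneg_of_mul_nonneg_left h.1 hr,
    ((mul_eq_zero.mp h.2.symm).resolve_right hr.ne').symm⟩

lemma trace_adjoint_comp_nonneg {n : ℕ} (A : E n →ₗ[ℂ] E n) :
    0 ≤ trace ℂ (E n) (adjoint A ∘ₗ A) := by
  simp only [trace_eq, comp_apply, adjoint_inner_right]
  exact Finset.sum_nonneg fun i _ => inner_self_nonneg_complex _

lemma trace_adjoint_comp_pos {n : ℕ} {A : E n →ₗ[ℂ] E n} (hA : A ≠ 0) :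
    0 < trace ℂ (E n) (adjoint A ∘ₗ A) := by
  refine (trace_adjoint_comp_nonneg A).lt_of_ne' fun h => hA ?_
  simp only [trace_eq, comp_apply, adjoint_inner_right] at h
  rw [Finset.sum_eq_zero_iff_of_nonneg fun i _ => inner_self_nonneg_complex _] at h
  exact ext_e fun i => by simpa using h i (Finset.mem_univ i)

lemma pair_eq_trace {n : ℕ} (ν μ : Vb n) :
    pair ν μ = ∑ i, trace ℂ (E n) (adjoint (Lop ν (e n i)) ∘ₗ Lop μ (e n i)) := by
  simp only [pair, trace_eq, comp_apply, adjoint_inner_right, Lop]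

lemma pair_self_nonneg {n : ℕ} (μ : Vb n) : 0 ≤ pair μ μ := by
  rw [pair_eq_trace]
  exact Finset.sum_nonneg fun i _ => trace_adjoint_comp_nonneg _

lemma pair_self_pos {n : ℕ} {μ : Vb n} (hμ : μ ≠ 0) : 0 < pair μ μ := by
  obtain ⟨i, hi⟩ : ∃ i, μ (e n i) ≠ 0 := by
    by_contra! h
    exact hμ (ext_e h)
  rw [pair_eq_trace]
  exact Finset.sum_pos' (fun i _ => trace_adjoint_comp_nonneg _)
    ⟨i, Finset.mem_univ i, trace_adjoint_comp_pos hi⟩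

lemma pair_conj {n : ℕ} (ν μ : Vb n) : starRingEnd ℂ (pair ν μ) = pair μ ν := by
  simp only [pair, map_sum, inner_conj_symm]

lemma comp_sum_right {n : ℕ} (A : E n →ₗ[ℂ] E n) (B : Fin n → E n →ₗ[ℂ] E n) :
    A ∘ₗ ∑ i, B i = ∑ i, A ∘ₗ B i := by
  ext1 x
  simp only [comp_apply, LinearMap.sum_apply, map_sum]

/-- The defining property of the moment map, in polarized form. -/
lemma pair_act {n : ℕ} (A : E n →ₗ[ℂ] E n) (ν μ : Vb n) :
    pair ν (act A μ) = trace ℂ (E n) (A ∘ₗ polarMoment ν μ) := by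
  have h1 : ∀ i, trace ℂ (E n) (A ∘ₗ (Lop μ (e n i) ∘ₗ adjoint (Lop ν (e n i))))
      = ∑ j, ⟪ν (e n i) (e n j), A (μ (e n i) (e n j))⟫_ℂ := fun i => by
    rw [← LinearMap.comp_assoc, LinearMap.trace_comp_comm']
    simp only [trace_eq, comp_apply, adjoint_inner_right, Lop]
  have h2 : ∀ i, trace ℂ (E n) (A ∘ₗ (adjoint (Lop ν (e n i)) ∘ₗ Lop μ (e n i)))
      = ∑ j, ⟪ν (e n i) (e n j), μ (e n i) (A (e n j))⟫_ℂ := fun i => by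
    rw [LinearMap.trace_comp_comm']
    simp only [trace_eq, comp_apply, adjoint_inner_right, Lop]
  have h3 : ∀ j, trace ℂ (E n) (A ∘ₗ (adjoint (Rop ν (e n j)) ∘ₗ Rop μ (e n j)))
      = ∑ i, ⟪ν (e n i) (e n j), μ (A (e n i)) (e n j)⟫_ℂ := fun j => by
    rw [LinearMap.trace_comp_comm']
    simp only [trace_eq, comp_apply, adjoint_inner_right, Rop, flip_apply]
  simp only [polarMoment, LinearMap.comp_sub, comp_sum_right, map_sub, map_sum, h1, h2, h3]
  rw [Finset.sum_comm (f := fun j i => ⟪ν (e n i) (e n j), μ (A (e n i)) (e n j)⟫_ℂ)]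
  simp only [pair, act, LinearMap.sub_apply, compr₂_apply, comp_apply, compl₂_apply,
    inner_sub_right, Finset.sum_sub_distrib]
  ring

/-- The adjoint of the action of `A` is the action of `A*`. -/
lemma pair_act_left {n : ℕ} (A : E n →ₗ[ℂ] E n) (ν μ : Vb n) :
    pair ν (act A μ) = pair (act (adjoint A) ν) μ := by
  rw [← pair_conj μ, pair_act, pair_act, ← trace_adjoint, adjoint_comp, adjoint_polarMoment,
    adjoint_adjoint, LinearMap.trace_comp_comm']

lemma act_comp_sub {n : ℕ} (A B : E n →ₗ[ℂ] E n) (μ : Vb n) :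
    act (A ∘ₗ B - B ∘ₗ A) μ = act A (act B μ) - act B (act A μ) := by
  ext1 x
  ext1 y
  simp only [act, LinearMap.sub_apply, compr₂_apply, comp_apply, compl₂_apply, map_sub]
  abel

lemma IsDer.act_eq_zero {n : ℕ} {μ : Vb n} {A : E n →ₗ[ℂ] E n} (h : IsDer μ A) :
    act A μ = 0 := by
  ext1 x
  ext1 y
  simp [act, h x y]

lemma trace_comp_Mmap {n : ℕ} (A : E n →ₗ[ℂ] E n) (μ : Vb n) :
    trace ℂ (E n) (A ∘ₗ Mmap μ) = 2 * pair μ (act A μ) := by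
  rw [Mmap_eq, LinearMap.comp_smul, map_smul, pair_act, smul_eq_mul]

/-- For a derivation `A`, `tr([A,A*] M_μ) = 2‖A*.μ‖²`. -/
lemma trace_commutator_Mmap {n : ℕ} {μ : Vb n} {A : E n →ₗ[ℂ] E n} (h : IsDer μ A) :
    trace ℂ (E n) ((A ∘ₗ adjoint A - adjoint A ∘ₗ A) ∘ₗ Mmap μ)
      = 2 * pair (act (adjoint A) μ) (act (adjoint A) μ) := by
  have h0 : act (adjoint A) (0 : Vb n) = 0 := by
    ext1 x
    ext1 y
    simp [act]
  rw [trace_comp_Mmap, act_comp_sub, h.act_eq_zero, h0, sub_zero, pair_act_left]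

/-- A nonzero derivation `A` with `[D,A] = aA` forces `a ≥ 0`, because
`a ‖A‖² = tr([D,A]A*) = tr(M_μ [A,A*]) = 2‖A*.μ‖²`. -/
lemma nonneg_of_derivation {n : ℕ} {μ : Vb n} {c : ℂ} {D A : E n →ₗ[ℂ] E n} {a : ℂ}
    (hM : Mmap μ = c • (LinearMap.id : E n →ₗ[ℂ] E n) + D) (hA : IsDer μ A) (hA0 : A ≠ 0)
    (hDA : D ∘ₗ A - A ∘ₗ D = a • A) : 0 ≤ a := by
  have key := trace_commutator_Mmap hA
  have hcomm : trace ℂ (E n) ((A ∘ₗ adjoint A - adjoint A ∘ₗ A) ∘ₗ Mmap μ)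
      = a * trace ℂ (E n) (adjoint A ∘ₗ A) := by
    have hexp : a * trace ℂ (E n) (adjoint A ∘ₗ A)
        = trace ℂ (E n) (adjoint A ∘ₗ (D ∘ₗ A - A ∘ₗ D)) := by
      rw [hDA, LinearMap.comp_smul, map_smul, smul_eq_mul]
    have e1 : trace ℂ (E n) (A ∘ₗ adjoint A) = trace ℂ (E n) (adjoint A ∘ₗ A) :=
      LinearMap.trace_comp_comm' _ _
    have e2 : trace ℂ (E n) (A ∘ₗ adjoint A ∘ₗ D) = trace ℂ (E n) (adjoint A ∘ₗ D ∘ₗ A) := by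
      rw [LinearMap.trace_comp_comm', LinearMap.comp_assoc]
    rw [hexp, hM]
    simp only [LinearMap.comp_add, LinearMap.comp_sub, LinearMap.sub_comp, LinearMap.comp_smul,
      LinearMap.comp_id, LinearMap.comp_assoc, map_add, map_sub, map_smul, e1, e2]
    ring_nf
  have hpos := trace_adjoint_comp_pos hA0
  have hnn : 0 ≤ a * trace ℂ (E n) (adjoint A ∘ₗ A) := by
    rw [← hcomm, key]
    exact mul_nonneg (by norm_num) (pair_self_nonneg _)
  exact nonneg_of_mul_nonneg_complex hnn hpos

/-- The constant `c` is nonpositive: `tr(M_μ D) = 0`, so `0 ≤ tr(M_μ²) = c tr M_μ = -2c‖μ‖²`. -/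
lemma const_nonpos {n : ℕ} {μ : Vb n} (hμ : μ ≠ 0) {c : ℂ} {D : E n →ₗ[ℂ] E n}
    (hDer : IsDer μ D) (hM : Mmap μ = c • (LinearMap.id : E n →ₗ[ℂ] E n) + D) : c ≤ 0 := by
  have hid : act (LinearMap.id : E n →ₗ[ℂ] E n) μ = -μ := by
    ext1 x
    ext1 y
    simp [act]
  have hadj : adjoint (Mmap μ) = Mmap μ := by
    rw [Mmap_eq, map_smulₛₗ, adjoint_polarMoment, map_ofNat]
  have h1 := trace_comp_Mmap (LinearMap.id : E n →ₗ[ℂ] E n) μ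
  have h2 := trace_comp_Mmap D μ
  have hneg : pair μ (-μ) = -pair μ μ := by simp [pair]
  have hzero : pair μ (0 : Vb n) = 0 := by simp [pair]
  rw [hid, hneg, LinearMap.id_comp] at h1
  rw [hDer.act_eq_zero, hzero, mul_zero] at h2
  have h3 := trace_adjoint_comp_nonneg (Mmap μ)
  rw [hadj] at h3
  have h4 : Mmap μ ∘ₗ Mmap μ = c • Mmap μ + D ∘ₗ Mmap μ := by
    conv_lhs => enter [1]; rw [hM]
    rw [LinearMap.add_comp, LinearMap.smul_comp, LinearMap.id_comp]
  rw [h4, map_add, map_smul, h1, h2, smul_eq_mul, add_zero] at h3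
  have h5 : 0 ≤ (-c) * (2 * pair μ μ) := by
    convert h3 using 1
    ring
  exact neg_nonneg.mp
    (nonneg_of_mul_nonneg_complex h5 (mul_pos (by norm_num) (pair_self_pos hμ)))

/-- On the annihilator of `μ` the negative terms of `M_μ` vanish. -/
lemma inner_Mmap_nonneg {n : ℕ} {μ : Vb n} {X : E n} (hL : Lop μ X = 0) (hR : Rop μ X = 0) :
    0 ≤ ⟪X, Mmap μ X⟫_ℂ := by
  have h1 : ∀ i, Lop μ (e n i) X = 0 := fun i => LinearMap.congr_fun hR (e n i)
  have h2 : ∀ i, Rop μ (e n i) X = 0 := fun i => LinearMap.congr_fun hL (e n i)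
  have h3 : ⟪X, Mmap μ X⟫_ℂ =
      2 * ∑ i, ⟪adjoint (Lop μ (e n i)) X, adjoint (Lop μ (e n i)) X⟫_ℂ := by
    simp only [Mmap, LinearMap.sub_apply, LinearMap.smul_apply, LinearMap.sum_apply, comp_apply,
      h1, h2, map_zero, Finset.sum_const_zero, smul_zero, sub_zero, inner_smul_right, inner_sum,
      adjoint_inner_left]
  rw [h3]
  refine mul_nonneg (by norm_num) (Finset.sum_nonneg fun i _ => ?_)
  exact inner_self_nonneg_complex _

/-- Nonnegativity: if `0 ≠ μ` is a symmetric Leibniz structure and `M_μ = c·I + D`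
with `c ∈ ℝ`, `D ∈ Der(μ)`, then every eigenvalue of `D` is nonnegative. -/
theorem symLeibniz_eigenvalues_nonneg {n : ℕ} (μ : Vb n) (hμ : μ ≠ 0)
    (hsym : IsSymLeibniz μ)
    (c : ℝ) (D : E n →ₗ[ℂ] E n) (hDer : IsDer μ D)
    (hM : Mmap μ = (c : ℂ) • (LinearMap.id : E n →ₗ[ℂ] E n) + D) :
    ∀ a : ℂ, Module.End.HasEigenvalue (D : Module.End ℂ (E n)) a → 0 ≤ a := by
  intro a ha
  obtain ⟨X, hX⟩ := ha.exists_hasEigenvector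
  have hDX : D X = a • X := hX.apply_eq_smul
  by_cases hL : Lop μ X = 0
  · by_cases hR : Rop μ X = 0
    · have h := inner_Mmap_nonneg hL hR
      have hXpos : (0 : ℂ) < ⟪X, X⟫_ℂ := inner_self_pos_complex hX.2
      have h' : ⟪X, Mmap μ X⟫_ℂ = ((c : ℂ) + a) * ⟪X, X⟫_ℂ := by
        rw [hM, LinearMap.add_apply, LinearMap.smul_apply, LinearMap.id_apply, hDX, ← add_smul,
          inner_smul_right]
      rw [h'] at h
      have hca := nonneg_of_mul_nonneg_complex h hXpos
      have hc := const_nonpos hμ hDer hM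
      calc (0 : ℂ) ≤ (c : ℂ) + a := hca
        _ ≤ 0 + a := by gcongr
        _ = a := zero_add a
    · refine nonneg_of_derivation (A := Rop μ X) hM (fun x y => hsym.2 x y X) hR ?_
      ext1 Y
      have := hDer Y X
      simp [Rop, this, hDX]
  · refine nonneg_of_derivation (A := Lop μ X) hM (fun x y => hsym.1 X x y) hL ?_
    ext1 Y
    have := hDer X Y
    simp [Lop, this, hDX]
end
end
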